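/- Let ω be a non-quasianalytic weight function with constant K in condition (α), and let G(D) be given by coefficients satisfying |∂^α G(0)| ≤ α! exp(k − k φ*(|α|/k)) for some k > 0. Then for every μ ∈ ℝ, 1 ≤ p < ∞, and h ∈ ℕ, choosing m ≥ max{kL, hL}, there is a constant C > 0 such that for all f with t_{2m,μ,p}(f) < ∞: ( Σ_β ‖e^{μω} ∂^β (G(D)f)‖_p^p exp(−ph φ*(|β|/h)) )^{1/p} ≤ C · t_{2m,μ,p}(f), where G(D)f = Σ_α i^{|α|} (∂^α G(0)/α!) ∂^α f and t_{λ,μ,p}(f)^p = Σ_α ‖e^{μω}∂^α f‖_p^p exp(−pλφ*(|α|/λ)). In particular G(D) maps D_{L^p_μ,ω}(ℝ^N) continuously into itself. -/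

import Mathlib

open MeasureTheory Real ENNReal Filter

noncomputable section

abbrev Euc (N : ℕ) := EuclideanSpace ℝ (Fin N)

/-- First-order partial derivative in direction `i`. -/
def pd {N : ℕ} (i : Fin N) (f : Euc N → ℂ) : Euc N → ℂ :=
  fun x => fderiv ℝ f x (EuclideanSpace.single i (1:ℝ))

def pdPow {N : ℕ} (i : Fin N) : ℕ → (Euc N → ℂ) → (Euc N → ℂ)
  | 0, f => f
  | n+1, f => pd i (pdPow i n f)

/-- Multi-index partial derivative `∂^α f`. -/
def mderiv {N : ℕ} (α : Fin N → ℕ) (f : Euc N → ℂ) : Euc N → ℂ :=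
  (List.finRange N).foldr (fun i g => pdPow i (α i) g) f

/-- Length `|α|` of a multi-index. -/
def msize {N : ℕ} (α : Fin N → ℕ) : ℕ := ∑ i, α i

/-- Weighted `L^p` norm `‖e^{w} g‖_p` (value in `ℝ≥0∞`). -/
def wLp {N : ℕ} (p : ℝ≥0∞) (w : Euc N → ℝ) (g : Euc N → ℂ) : ℝ≥0∞ :=
  eLpNorm (fun x => Real.exp (w x) * ‖g x‖) p volume

def youngConj (φ : ℝ → ℝ) (s : ℝ) : ℝ :=
  sSup {y | ∃ t ≥ 0, y = s * t - φ t}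

/-- Young conjugate `φ*` of `φ_ω = ω ∘ exp`. -/
def phiStar (ω : ℝ → ℝ) (s : ℝ) : ℝ :=
  youngConj (fun t => ω (Real.exp t)) s

/-- A non-quasianalytic weight function in the sense of Braun–Meise–Taylor. -/
structure IsWeightFun (ω : ℝ → ℝ) : Prop where
  continuous : ContinuousOn ω (Set.Ici 0)
  mono : MonotoneOn ω (Set.Ici 0)
  nonneg : ∀ t, 0 ≤ t → 0 ≤ ω t
  alpha : ∃ K ≥ 1, ∀ t ≥ 0, ω (2*t) ≤ K * (1 + ω t)
  beta : IntegrableOn (fun t => ω t / (1 + t^2)) (Set.Ici 1)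
  gamma : ∃ a b : ℝ, 0 < b ∧ ∀ t ≥ 0, a + b * Real.log (1+t) ≤ ω t
  delta : ConvexOn ℝ (Set.Ici 0) (fun t => ω (Real.exp t))
  vanish : ∀ t ∈ Set.Icc (0:ℝ) 1, ω t = 0

/-- The factorial `α!` of a multi-index. -/
def mfact {N : ℕ} (α : Fin N → ℕ) : ℕ := ∏ i, Nat.factorial (α i)

/-- The ultradifferential operator `G(D)f = Σ_α i^{|α|} (∂^α G(0)/α!) ∂^α f`,
given the coefficients `c α = ∂^α G(0)`. -/
def GD {N : ℕ} (c : (Fin N → ℕ) → ℂ) (f : Euc N → ℂ) : Euc N → ℂ :=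
  fun x => ∑' α : Fin N → ℕ,
    Complex.I ^ (msize α) * (c α / (mfact α : ℂ)) * mderiv α f x

/-- The norm `t_{λ,μ,p}(f)` of `D_{L^p_μ,ω}(ℝ^N)`. -/
def tnorm {N : ℕ} (ω : ℝ → ℝ) (lam μ p : ℝ) (f : Euc N → ℂ) : ℝ≥0∞ :=
  (∑' α : Fin N → ℕ,
    (wLp (ENNReal.ofReal p) (fun x => μ * ω ‖x‖) (mderiv α f)) ^ p *
      ENNReal.ofReal (Real.exp (-(p * lam * phiStar ω ((msize α : ℝ) / lam))))) ^ (1/p)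

/-!
A Sobolev estimate bounds the supremum of a smooth function over a box by the `L^1` norms there of
its mixed derivatives of order at most one in each variable, hence by weighted `L^p` norms.
Therefore, as soon as the weighted `L^p` norms of `∂^β` of the terms of `G(D)f` are summable for
every `β`, the series may be differentiated term by term and Minkowski's inequality applies.

Summability comes from `ω(et) ≤ L(1 + ω(t))`: replacing `t` by `t + 1` in the supremum defining `φ*`
gives `m φ*(y/m) ≤ l φ*(y/l) - y + lL` whenever `lL ≤ m`. With `l = k` and
`2m φ*(|α+β|/2m) ≤ m φ*(|α|/m) + m φ*(|β|/m)`, the `α`-th term gains a factor `e^{-|α|}`; with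
`l = h`, the weight of `∂^β(G(D)f)` gains `e^{-|β|}`, so that the `ℓ^p` norm over `β` can be
replaced by the `ℓ^1` norm.
-/

section YoungConjugate

/-- The supremum defining the Young conjugate `φ*(s)` is finite for every `s`; where it is infinite,
`youngConj φ s` is the junk value `sSup _ = 0`. -/
def HasYoungConj (φ : ℝ → ℝ) : Prop :=
  ∀ s, BddAbove {y | ∃ t ≥ 0, y = s * t - φ t}

variable {φ : ℝ → ℝ} {L l m x y b t : ℝ}

lemma hasYoungConj_of_isLittleO (hφ : ∀ t ≥ 0, 0 ≤ φ t)
    (hlim : (fun t : ℝ => t) =o[atTop] φ) : HasYoungConj φ := by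
  intro s
  have hev : ∀ᶠ t in atTop, s * t ≤ φ t := by
    filter_upwards [(hlim.const_mul_left s).bound one_pos, eventually_ge_atTop 0] with t ht ht0
    simpa only [one_mul, Real.norm_of_nonneg (hφ t ht0)] using (le_norm_self _).trans ht
  obtain ⟨A, hA⟩ := eventually_atTop.1 hev
  refine ⟨|s| * |A|, ?_⟩
  rintro _ ⟨t, ht, rfl⟩
  rcases le_total A t with hAt | htA
  · linarith [hA t hAt, mul_nonneg (abs_nonneg s) (abs_nonneg A)]
  · have : s * t ≤ |s| * |A| :=
      mul_le_mul (le_abs_self s) (htA.trans (le_abs_self A)) ht (abs_nonneg s)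
    linarith [hφ t ht]

lemma HasYoungConj.sub_le_mul_youngConj_div (hφ : HasYoungConj φ) (hl : 0 < l) (ht : 0 ≤ t) :
    y * t - l * φ t ≤ l * youngConj φ (y / l) := by
  have h : y / l * t - φ t ≤ youngConj φ (y / l) := le_csSup (hφ _) ⟨t, ht, rfl⟩
  calc y * t - l * φ t = l * (y / l * t - φ t) := by field_simp
    _ ≤ l * youngConj φ (y / l) := mul_le_mul_of_nonneg_left h hl.le

lemma mul_youngConj_div_le (hl : 0 < l) (h : ∀ t ≥ 0, y * t - l * φ t ≤ b) :
    l * youngConj φ (y / l) ≤ b := by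
  rw [← le_div_iff₀' hl]
  refine csSup_le ⟨_, 0, le_rfl, rfl⟩ ?_
  rintro _ ⟨t, ht, rfl⟩
  rw [le_div_iff₀' hl]
  calc l * (y / l * t - φ t) = y * t - l * φ t := by field_simp
    _ ≤ b := h t ht

lemma HasYoungConj.add_mul_youngConj_add_div_le (hφ : HasYoungConj φ) (hl : 0 < l) (hm : 0 < m) :
    (l + m) * youngConj φ ((x + y) / (l + m)) ≤
      l * youngConj φ (x / l) + m * youngConj φ (y / m) :=
  mul_youngConj_div_le (add_pos hl hm) fun t ht => by
    linarith [hφ.sub_le_mul_youngConj_div (y := x) hl ht,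
      hφ.sub_le_mul_youngConj_div (y := y) hm ht]

/-- Evaluating the supremum for `φ*(y / l)` at `t + 1` instead of `t` gains the term `-y`. -/
lemma HasYoungConj.mul_youngConj_div_le_sub (hφ : HasYoungConj φ) (hnonneg : ∀ t ≥ 0, 0 ≤ φ t)
    (hshift : ∀ t ≥ 0, φ (t + 1) ≤ L * (1 + φ t)) (hl : 0 < l) (hm : 0 < m) (hlm : l * L ≤ m) :
    m * youngConj φ (y / m) ≤ l * youngConj φ (y / l) - y + l * L := by
  refine mul_youngConj_div_le hm fun t ht => ?_
  have hconj := hφ.sub_le_mul_youngConj_div (y := y) hl (add_nonneg ht zero_le_one)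
  have hφt : l * φ (t + 1) ≤ l * L + m * φ t :=
    calc l * φ (t + 1) ≤ l * (L * (1 + φ t)) := mul_le_mul_of_nonneg_left (hshift t ht) hl.le
      _ = l * L + l * L * φ t := by ring
      _ ≤ l * L + m * φ t := by gcongr; exact hnonneg t ht
  linarith

lemma HasYoungConj.two_mul_mul_youngConj_add_div_le (hφ : HasYoungConj φ)
    (hnonneg : ∀ t ≥ 0, 0 ≤ φ t) (hshift : ∀ t ≥ 0, φ (t + 1) ≤ L * (1 + φ t)) (hl : 0 < l)
    (hm : 0 < m) (hlm : l * L ≤ m) :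
    2 * m * youngConj φ ((x + y) / (2 * m)) ≤
      l * youngConj φ (x / l) - x + l * L + m * youngConj φ (y / m) := by
  have hadd := hφ.add_mul_youngConj_add_div_le (x := x) (y := y) hm hm
  rw [← two_mul] at hadd
  linarith [hφ.mul_youngConj_div_le_sub (y := x) hnonneg hshift hl hm hlm]

lemma hasYoungConj_comp_exp {ω : ℝ → ℝ} (hω : ∀ t, 0 ≤ t → 0 ≤ ω t)
    (hlog : (fun t => Real.log (1 + t)) =o[atTop] ω) : HasYoungConj fun t => ω (Real.exp t) := by
  refine hasYoungConj_of_isLittleO (fun t _ => hω _ (Real.exp_pos t).le) ?_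
  have hle : ∀ t ≥ (0 : ℝ), ‖t‖ ≤ ‖Real.log (1 + Real.exp t)‖ := fun t ht => by
    have h : t ≤ Real.log (1 + Real.exp t) := by
      rw [Real.le_log_iff_exp_le (by positivity)]
      linarith
    rwa [Real.norm_of_nonneg ht, Real.norm_of_nonneg (ht.trans h)]
  exact (Asymptotics.IsBigO.of_bound' ((eventually_ge_atTop 0).mono hle)).trans_isLittleO
    (hlog.comp_tendsto Real.tendsto_exp_atTop)

end YoungConjugate

section PartialDerivatives

variable {N : ℕ} {f : Euc N → ℂ}

lemma contDiff_pd (i : Fin N) (hf : ContDiff ℝ (⊤ : ℕ∞) f) : ContDiff ℝ (⊤ : ℕ∞) (pd i f) :=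
  (hf.fderiv_right (by simp)).clm_apply contDiff_const

lemma contDiff_pdPow (i : Fin N) (n : ℕ) (hf : ContDiff ℝ (⊤ : ℕ∞) f) :
    ContDiff ℝ (⊤ : ℕ∞) (pdPow i n f) := by
  induction n with
  | zero => exact hf
  | succ n ih => exact contDiff_pd i ih

lemma contDiff_foldr_pdPow (l : List (Fin N)) (α : Fin N → ℕ) (hf : ContDiff ℝ (⊤ : ℕ∞) f) :
    ContDiff ℝ (⊤ : ℕ∞) (l.foldr (fun i g => pdPow i (α i) g) f) := by
  induction l with
  | nil => exact hf
  | cons i l ih => exact contDiff_pdPow i _ ih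

lemma contDiff_mderiv (α : Fin N → ℕ) (hf : ContDiff ℝ (⊤ : ℕ∞) f) :
    ContDiff ℝ (⊤ : ℕ∞) (mderiv α f) :=
  contDiff_foldr_pdPow _ α hf

lemma pd_comm (i j : Fin N) (hf : ContDiff ℝ 2 f) : pd i (pd j f) = pd j (pd i f) := by
  have hd : Differentiable ℝ (fderiv ℝ f) :=
    (hf.fderiv_right (m := 1) (by norm_num)).differentiable one_ne_zero
  have pd_pd : ∀ (a b : Fin N) x, pd a (pd b f) x =
      fderiv ℝ (fderiv ℝ f) x (EuclideanSpace.single a 1) (EuclideanSpace.single b 1) := by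
    intro a b x
    unfold pd
    rw [fderiv_clm_apply (hd x) (differentiableAt_const _)]
    simp
  funext x
  rw [pd_pd, pd_pd]
  exact hf.contDiffAt.isSymmSndFDerivAt (by simp) _ _

lemma pd_pdPow (i j : Fin N) (n : ℕ) (hf : ContDiff ℝ (⊤ : ℕ∞) f) :
    pd i (pdPow j n f) = pdPow j n (pd i f) := by
  induction n with
  | zero => rfl
  | succ n ih =>
    change pd i (pd j (pdPow j n f)) = pd j (pdPow j n (pd i f))
    rw [pd_comm i j (contDiff_infty.1 (contDiff_pdPow j n hf) 2), ih]

lemma pd_foldr_pdPow {i : Fin N} {l : List (Fin N)} (hl : l.Nodup) (hi : i ∈ l) (α : Fin N → ℕ)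
    (hf : ContDiff ℝ (⊤ : ℕ∞) f) :
    pd i (l.foldr (fun j g => pdPow j (α j) g) f) =
      l.foldr (fun j g => pdPow j ((α + Pi.single i 1 : Fin N → ℕ) j) g) f := by
  induction l with
  | nil => simp at hi
  | cons a l ih =>
    obtain ⟨hal, hl⟩ := List.nodup_cons.1 hl
    simp only [List.foldr_cons]
    rcases eq_or_ne i a with rfl | hia
    · have htail : l.foldr (fun j g => pdPow j ((α + Pi.single i 1 : Fin N → ℕ) j) g) f =
          l.foldr (fun j g => pdPow j (α j) g) f :=
        List.foldr_ext _ _ _ fun j hj g => by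
          simp [Pi.single_eq_of_ne (ne_of_mem_of_not_mem hj hal)]
      rw [htail, Pi.add_apply, Pi.single_eq_same]
      rfl
    · rw [pd_pdPow i a _ (contDiff_foldr_pdPow l α hf),
        ih hl ((List.mem_cons.1 hi).resolve_left hia), Pi.add_apply,
        Pi.single_eq_of_ne hia.symm, add_zero]

lemma pd_mderiv (i : Fin N) (α : Fin N → ℕ) (hf : ContDiff ℝ (⊤ : ℕ∞) f) :
    pd i (mderiv α f) = mderiv (α + Pi.single i 1) f :=
  pd_foldr_pdPow (List.nodup_finRange N) (List.mem_finRange i) α hf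

lemma mderiv_zero (f : Euc N → ℂ) : mderiv 0 f = f := by
  unfold mderiv
  induction List.finRange N with
  | nil => rfl
  | cons _ _ ih => exact ih

variable {F : (Fin N → ℕ) → Euc N → ℂ}

lemma pdPow_of_pd_eq (hF : ∀ i β, pd i (F β) = F (β + Pi.single i 1)) (i : Fin N) (n : ℕ)
    (δ : Fin N → ℕ) : pdPow i n (F δ) = F (δ + Pi.single i n) := by
  induction n with
  | zero => simp [pdPow]
  | succ n ih =>
    change pd i (pdPow i n (F δ)) = _
    rw [ih, hF, add_assoc, ← Pi.single_add]

lemma foldr_pdPow_of_pd_eq (hF : ∀ i β, pd i (F β) = F (β + Pi.single i 1)) (l : List (Fin N))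
    (β δ : Fin N → ℕ) :
    l.foldr (fun i g => pdPow i (β i) g) (F δ) =
      F (δ + (l.map fun i => Pi.single i (β i)).sum) := by
  induction l with
  | nil => simp
  | cons i l ih =>
    rw [List.foldr_cons, ih, pdPow_of_pd_eq hF, List.map_cons, List.sum_cons, add_assoc,
      add_comm (List.sum _)]

/-- A family closed under the first-order derivatives determines all multi-index derivatives, so
identities for `mderiv` reduce to first-order ones. -/
lemma mderiv_of_pd_eq (hF : ∀ i β, pd i (F β) = F (β + Pi.single i 1)) (β δ : Fin N → ℕ) :
    mderiv β (F δ) = F (δ + β) := by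
  rw [mderiv, foldr_pdPow_of_pd_eq hF, ← List.ofFn_eq_map, List.sum_ofFn,
    Finset.univ_sum_single β]

lemma mderiv_mderiv (β α : Fin N → ℕ) (hf : ContDiff ℝ (⊤ : ℕ∞) f) :
    mderiv β (mderiv α f) = mderiv (α + β) f :=
  mderiv_of_pd_eq (F := fun β => mderiv β f) (fun i β => pd_mderiv i β hf) β α

lemma mderiv_pd (β : Fin N → ℕ) (i : Fin N) (hf : ContDiff ℝ (⊤ : ℕ∞) f) :
    mderiv β (pd i f) = mderiv (β + Pi.single i 1) f := by
  have h : pd i f = mderiv (Pi.single i 1) f := by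
    simpa only [mderiv_zero, zero_add] using pd_mderiv i 0 hf
  rw [h, mderiv_mderiv _ _ hf, add_comm]

lemma mderiv_const_mul (a : ℂ) (β : Fin N → ℕ) (hf : ContDiff ℝ (⊤ : ℕ∞) f) :
    mderiv β (fun x => a * f x) = fun x => a * mderiv β f x := by
  have hpd : ∀ i β, pd i (fun x => a * mderiv β f x) =
      fun x => a * mderiv (β + Pi.single i 1) f x := by
    intro i β
    funext x
    have hd : DifferentiableAt ℝ (mderiv β f) x := (contDiff_mderiv β hf).differentiable (by simp) x
    rw [← pd_mderiv i β hf, pd, fderiv_const_mul hd]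
    rfl
  simpa only [mderiv_zero, zero_add] using
    mderiv_of_pd_eq (F := fun β x => a * mderiv β f x) hpd β 0

lemma norm_fderiv_le_sum_norm_pd (f : Euc N → ℂ) (x : Euc N) :
    ‖fderiv ℝ f x‖ ≤ ∑ i, ‖pd i f x‖ := by
  refine ContinuousLinearMap.opNorm_le_bound _ (by positivity) fun v => ?_
  have hv : v = ∑ i, v i • EuclideanSpace.single i (1 : ℝ) := by
    ext j
    simp [Finset.sum_apply, Pi.single_apply]
  calc ‖fderiv ℝ f x v‖ = ‖∑ i, v i • pd i f x‖ := by
        conv_lhs => rw [hv, map_sum]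
        simp only [map_smul, pd]
    _ ≤ ∑ i, ‖v i • pd i f x‖ := norm_sum_le _ _
    _ ≤ ∑ i, ‖pd i f x‖ * ‖v‖ := by
        gcongr with i
        rw [norm_smul, mul_comm]
        gcongr
        exact PiLp.norm_apply_le v i
    _ = (∑ i, ‖pd i f x‖) * ‖v‖ := (Finset.sum_mul ..).symm

end PartialDerivatives

section MultiIndices

variable {N : ℕ}

lemma msize_add (α β : Fin N → ℕ) : msize (α + β) = msize α + msize β :=
  Finset.sum_add_distrib

lemma hasSum_pow_msize (N : ℕ) {r : ℝ} (h0 : 0 ≤ r) (h1 : r < 1) :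
    HasSum (fun α : Fin N → ℕ => r ^ msize α) ((1 - r)⁻¹ ^ N) := by
  induction N with
  | zero => simp [msize]
  | succ N ih =>
    have hgeom := hasSum_geometric_of_lt_one h0 h1
    rw [← (Fin.consEquiv fun _ : Fin (N + 1) => ℕ).hasSum_iff, pow_succ']
    have hpow : ∀ n : ℕ, 0 ≤ r ^ n := fun n => pow_nonneg h0 n
    have hprod := hgeom.summable.mul_of_nonneg ih.summable hpow fun α => hpow (msize α)
    refine (hgeom.mul ih hprod).congr_fun ?_
    rintro ⟨n, α⟩
    simp [msize, Fin.consEquiv, Fin.sum_univ_succ, pow_add]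

lemma tsum_ofReal_exp_neg_msize (N : ℕ) :
    ∑' α : Fin N → ℕ, ENNReal.ofReal (Real.exp (-(msize α : ℝ))) =
      ENNReal.ofReal ((1 - Real.exp (-1))⁻¹ ^ N) := by
  have hsum := hasSum_pow_msize N (Real.exp_pos (-1)).le (Real.exp_lt_one_iff.2 neg_one_lt_zero)
  simp only [← Real.exp_nat_mul, mul_neg_one] at hsum
  rw [← hsum.tsum_eq, ENNReal.ofReal_tsum_of_nonneg (fun _ => (Real.exp_pos _).le) hsum.summable]

end MultiIndices

section TermwiseDifferentiation

variable {ι E F : Type*} [NormedAddCommGroup E] [NormedAddCommGroup F]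

/-- The hypothesis of the Weierstrass M-test on every ball: on each of them the family `u` of
functions is dominated in norm by a summable family of constants. -/
def LocallyDominated (u : ι → E → F) : Prop :=
  ∀ R : ℝ, ∃ b : ι → ℝ, Summable b ∧ ∀ j, ∀ x ∈ Metric.ball 0 R, ‖u j x‖ ≤ b j

lemma LocallyDominated.summable [CompleteSpace F] {u : ι → E → F} (hu : LocallyDominated u)
    (x : E) : Summable fun j => u j x := by
  obtain ⟨b, hb, hub⟩ := hu (‖x‖ + 1)
  exact hb.of_norm_bounded fun j => hub j x (by simp)

lemma LocallyDominated.hasFDerivAt_tsum [NormedSpace ℝ E] [NormedSpace ℝ F] [CompleteSpace F]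
    {u : ι → E → F} (hu : LocallyDominated u) (hu' : LocallyDominated fun j => fderiv ℝ (u j))
    (hdiff : ∀ j, Differentiable ℝ (u j)) (x : E) :
    HasFDerivAt (fun y => ∑' j, u j y) (∑' j, fderiv ℝ (u j) x) x := by
  obtain ⟨b, hb, hub⟩ := hu' (‖x‖ + 1)
  have hx : x ∈ Metric.ball (0 : E) (‖x‖ + 1) := by simp
  exact hasFDerivAt_tsum_of_isPreconnected hb Metric.isOpen_ball (convex_ball _ _).isPreconnected
    (fun j y _ => (hdiff j y).hasFDerivAt) hub hx (hu.summable x) hx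

variable {N : ℕ} {u : ι → Euc N → ℂ}

lemma locallyDominated_fderiv (hu : ∀ i, LocallyDominated fun j => pd i (u j)) :
    LocallyDominated fun j => fderiv ℝ (u j) := by
  intro R
  choose b hb hub using fun i => hu i R
  exact ⟨fun j => ∑ i, b i j, summable_sum fun i _ => hb i, fun j x hx =>
    (norm_fderiv_le_sum_norm_pd _ x).trans (Finset.sum_le_sum fun i _ => hub i j x hx)⟩

lemma pd_tsum (hdiff : ∀ j, Differentiable ℝ (u j)) (hu : LocallyDominated u)
    (hu' : ∀ i, LocallyDominated fun j => pd i (u j)) (i : Fin N) :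
    pd i (fun x => ∑' j, u j x) = fun x => ∑' j, pd i (u j) x := by
  have hu' := locallyDominated_fderiv hu'
  funext x
  rw [pd, (hu.hasFDerivAt_tsum hu' hdiff x).fderiv]
  exact (ContinuousLinearMap.apply ℝ ℂ (EuclideanSpace.single i (1 : ℝ))).map_tsum (hu'.summable x)

lemma mderiv_tsum (hu : ∀ j, ContDiff ℝ (⊤ : ℕ∞) (u j))
    (hdom : ∀ β, LocallyDominated fun j => mderiv β (u j)) (β : Fin N → ℕ) :
    mderiv β (fun x => ∑' j, u j x) = fun x => ∑' j, mderiv β (u j) x := by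
  have hpd : ∀ i β, pd i (fun x => ∑' j, mderiv β (u j) x) =
      fun x => ∑' j, mderiv (β + Pi.single i 1) (u j) x := by
    intro i β
    simp only [← pd_mderiv _ _ (hu _)]
    refine pd_tsum (fun j => (contDiff_mderiv β (hu j)).differentiable (by simp)) (hdom β)
      (fun i => ?_) i
    simpa only [pd_mderiv _ _ (hu _)] using hdom (β + Pi.single i 1)
  simpa only [mderiv_zero, zero_add] using
    mderiv_of_pd_eq (F := fun β x => ∑' j, mderiv β (u j) x) hpd β 0

end TermwiseDifferentiation

section LocalSobolev

lemma enorm_le_setLIntegral_enorm_add_enorm_deriv {E : Type*} [NormedAddCommGroup E]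
    [NormedSpace ℝ E] {F : ℝ → E} {a b x : ℝ} (hF : ContDiffOn ℝ 1 F (Set.Icc a b))
    (hab : 1 ≤ b - a) (hx : x ∈ Set.Icc a b) :
    ‖F x‖ₑ ≤ ∫⁻ t in Set.Icc a b, (‖F t‖ₑ + ‖deriv F t‖ₑ) := by
  have hincr : ∀ s ∈ Set.Icc a b, ∀ t ∈ Set.Icc a b, s ≤ t →
      ‖F t - F s‖ₑ ≤ ∫⁻ r in Set.Icc a b, ‖deriv F r‖ₑ := fun s hs t ht hst =>
    (enorm_sub_le_lintegral_deriv_of_contDiffOn_Icc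
      (hF.mono (Set.Icc_subset_Icc hs.1 ht.2)) hst).trans
      (lintegral_mono_set (Set.Icc_subset_Icc hs.1 ht.2))
  have hle : ∀ t ∈ Set.Icc a b, ‖F x‖ₑ ≤ ‖F t‖ₑ + ∫⁻ r in Set.Icc a b, ‖deriv F r‖ₑ := by
    intro t ht
    have hsub : ‖F x - F t‖ₑ ≤ ∫⁻ r in Set.Icc a b, ‖deriv F r‖ₑ := by
      rcases le_total t x with htx | hxt
      · exact hincr t ht x hx htx
      · rw [enorm_sub_rev]
        exact hincr x hx t ht hxt
    calc ‖F x‖ₑ = ‖F t + (F x - F t)‖ₑ := by rw [add_sub_cancel]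
      _ ≤ ‖F t‖ₑ + ‖F x - F t‖ₑ := enorm_add_le _ _
      _ ≤ _ := by gcongr
  rw [lintegral_add_left' (hF.continuousOn.aestronglyMeasurable measurableSet_Icc).enorm,
    ← tsub_le_iff_right]
  calc ‖F x‖ₑ - ∫⁻ r in Set.Icc a b, ‖deriv F r‖ₑ
      ≤ (‖F x‖ₑ - ∫⁻ r in Set.Icc a b, ‖deriv F r‖ₑ) * volume (Set.Icc a b) :=
        le_mul_of_one_le_right zero_le (by rwa [Real.volume_Icc, ENNReal.one_le_ofReal])
    _ = ∫⁻ _ in Set.Icc a b, (‖F x‖ₑ - ∫⁻ r in Set.Icc a b, ‖deriv F r‖ₑ) :=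
        (setLIntegral_const _ _).symm
    _ ≤ ∫⁻ t in Set.Icc a b, ‖F t‖ₑ :=
        setLIntegral_mono' measurableSet_Icc fun t ht => tsub_le_iff_right.2 (hle t ht)

variable {N : ℕ} {g : Euc N → ℂ}

lemma hasDerivAt_comp_update {x : Fin N → ℝ} {i : Fin N} {t : ℝ}
    (hg : DifferentiableAt ℝ g (WithLp.toLp 2 (Function.update x i t))) :
    HasDerivAt (fun t => g (WithLp.toLp 2 (Function.update x i t)))
      (pd i g (WithLp.toLp 2 (Function.update x i t))) t :=
  hg.hasFDerivAt.comp_hasDerivAt t <|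
    (PiLp.hasFDerivAt_toLp 2 _).comp_hasDerivAt t (hasDerivAt_update x i t)

lemma enorm_le_setLIntegral_enorm_add_enorm_pd (hg : ContDiff ℝ 1 g) {a b : ℝ} (hab : 1 ≤ b - a)
    {i : Fin N} {x : Fin N → ℝ} (hx : x i ∈ Set.Icc a b) :
    ‖g (WithLp.toLp 2 x)‖ₑ ≤ ∫⁻ t in Set.Icc a b,
      (‖g (WithLp.toLp 2 (Function.update x i t))‖ₑ +
        ‖pd i g (WithLp.toLp 2 (Function.update x i t))‖ₑ) := by
  have hcomp : ContDiff ℝ 1 fun t => g (WithLp.toLp 2 (Function.update x i t)) :=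
    hg.comp ((PiLp.contDiff_toLp).comp (contDiff_update 1 x i))
  have h := enorm_le_setLIntegral_enorm_add_enorm_deriv hcomp.contDiffOn hab hx
  simpa only [Function.update_eq_self,
    (hasDerivAt_comp_update (hg.differentiable one_ne_zero _)).deriv] using h

/-- The multi-index of the mixed derivative of order one in exactly the coordinates in `γ`. -/
def mixedIndex (γ : Finset (Fin N)) : Fin N → ℕ := ∑ i ∈ γ, Pi.single i 1

/-- `∑_{γ ⊆ s} |∂^γ g|`, the sum over all mixed derivatives of order at most one in each of the
coordinates in `s` and of order zero in the others. -/
def mixedDerivSum (s : Finset (Fin N)) (g : Euc N → ℂ) (x : Euc N) : ℝ≥0∞ :=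
  ∑ γ ∈ s.powerset, ‖mderiv (mixedIndex γ) g x‖ₑ

lemma mixedDerivSum_empty (g : Euc N → ℂ) (x : Euc N) : mixedDerivSum ∅ g x = ‖g x‖ₑ := by
  simp [mixedDerivSum, mixedIndex, mderiv_zero]

lemma mixedDerivSum_insert {s : Finset (Fin N)} {i : Fin N} (hi : i ∉ s)
    (hg : ContDiff ℝ (⊤ : ℕ∞) g) (x : Euc N) :
    mixedDerivSum (insert i s) g x = mixedDerivSum s g x + mixedDerivSum s (pd i g) x := by
  unfold mixedDerivSum
  rw [Finset.sum_powerset_insert hi]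
  congr 1
  refine Finset.sum_congr rfl fun γ hγ => ?_
  have hiγ : i ∉ γ := fun h => hi (Finset.mem_powerset.1 hγ h)
  rw [mderiv_pd _ _ hg, mixedIndex, Finset.sum_insert hiγ, add_comm, mixedIndex]

lemma continuous_mixedDerivSum (s : Finset (Fin N)) (hg : ContDiff ℝ (⊤ : ℕ∞) g) :
    Continuous (mixedDerivSum s g) :=
  continuous_finsetSum _ fun _ _ => (contDiff_mderiv _ hg).continuous.enorm

lemma measurable_mixedDerivSum_toLp (s : Finset (Fin N)) (hg : ContDiff ℝ (⊤ : ℕ∞) g) :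
    Measurable fun y : Fin N → ℝ => mixedDerivSum s g (WithLp.toLp 2 y) :=
  ((continuous_mixedDerivSum s hg).comp (PiLp.continuous_toLp 2 _)).measurable

lemma enorm_le_lmarginal_mixedDerivSum {a b : Fin N → ℝ} (hab : ∀ i, 1 ≤ b i - a i)
    (s : Finset (Fin N)) (hg : ContDiff ℝ (⊤ : ℕ∞) g) {x : Fin N → ℝ} (hx : x ∈ Set.Icc a b) :
    ‖g (WithLp.toLp 2 x)‖ₑ ≤
      lmarginal (fun i => (volume : Measure ℝ).restrict (Set.Icc (a i) (b i))) s
        (fun y => mixedDerivSum s g (WithLp.toLp 2 y)) x := by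
  induction s using Finset.induction_on generalizing g x with
  | empty => simp [mixedDerivSum_empty]
  | insert i s hi ih =>
    rw [lmarginal_insert _ (measurable_mixedDerivSum_toLp _ hg) hi]
    refine (enorm_le_setLIntegral_enorm_add_enorm_pd (contDiff_infty.1 hg 1) (hab i)
      ⟨hx.1 i, hx.2 i⟩).trans (setLIntegral_mono' measurableSet_Icc fun t ht => ?_)
    have hxt : Function.update x i t ∈ Set.Icc a b :=
      ⟨le_update_iff.2 ⟨ht.1, fun j _ => hx.1 j⟩, update_le_iff.2 ⟨ht.2, fun j _ => hx.2 j⟩⟩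
    refine (add_le_add (ih hg hxt) (ih (contDiff_pd i hg) hxt)).trans_eq ?_
    simp only [lmarginal, mixedDerivSum_insert hi hg]
    exact (lintegral_add_left
      ((measurable_mixedDerivSum_toLp s hg).comp measurable_updateFinset) _).symm

/-- The closed box `∏ᵢ [aᵢ, bᵢ]` as a subset of Euclidean space. -/
def box (a b : Fin N → ℝ) : Set (Euc N) := WithLp.ofLp ⁻¹' Set.Icc a b

lemma isCompact_box (a b : Fin N → ℝ) : IsCompact (box a b) :=
  (PiLp.homeomorph 2 fun _ : Fin N => ℝ).isCompact_preimage.2 isCompact_Icc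

lemma ball_subset_box (R : ℝ) :
    Metric.ball (0 : Euc N) R ⊆ box (fun _ => -R) fun _ => R := by
  intro x hx
  have hxR : ∀ i, |x i| ≤ R := fun i => (PiLp.norm_apply_le x i).trans (mem_ball_zero_iff.1 hx).le
  exact ⟨fun i => (abs_le.1 (hxR i)).1, fun i => (abs_le.1 (hxR i)).2⟩

lemma enorm_le_setLIntegral_mixedDerivSum {a b : Fin N → ℝ} (hab : ∀ i, 1 ≤ b i - a i)
    (hg : ContDiff ℝ (⊤ : ℕ∞) g) {x : Euc N} (hx : x ∈ box a b) :
    ‖g x‖ₑ ≤ ∫⁻ z in box a b, mixedDerivSum Finset.univ g z := by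
  have h := enorm_le_lmarginal_mixedDerivSum hab Finset.univ hg hx
  rw [lmarginal_univ, ← Measure.restrict_pi_pi, Set.pi_univ_Icc] at h
  rwa [← (PiLp.volume_preserving_toLp (Fin N)).setLIntegral_comp_preimage
    (isCompact_box a b).measurableSet (continuous_mixedDerivSum _ hg).measurable]

end LocalSobolev

section WeightedLp

lemma eLpNorm_tsum_le {α ι E : Type*} [MeasurableSpace α] {ν : Measure α} [Countable ι]
    [NormedAddCommGroup E] {p : ℝ≥0∞} (hp : 1 ≤ p) {u : ι → α → E}
    (hu : ∀ j, AEStronglyMeasurable (u j) ν) (hsum : ∀ᵐ x ∂ν, Summable fun j => u j x) :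
    eLpNorm (fun x => ∑' j, u j x) p ν ≤ ∑' j, eLpNorm (u j) p ν := by
  refine Lp.eLpNorm_le_of_ae_tendsto (u := atTop) (f := fun s : Finset ι => ∑ j ∈ s, u j)
    (.of_forall fun s => ?_) (fun s => Finset.aestronglyMeasurable_sum s fun j _ => hu j) ?_
  · exact (eLpNorm_sum_le (fun j _ => hu j) hp).trans (ENNReal.sum_le_tsum s)
  · filter_upwards [hsum] with x hx
    simpa only [Finset.sum_apply] using! hx.hasSum

variable {ι : Type*} {N : ℕ} {p : ℝ≥0∞} {w : Euc N → ℝ} {u : ι → Euc N → ℂ}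

lemma wLp_eq_eLpNorm_exp_smul (p : ℝ≥0∞) (w : Euc N → ℝ) (g : Euc N → ℂ) :
    wLp p w g = eLpNorm (fun x => Real.exp (w x) • g x) p volume :=
  eLpNorm_congr_norm_ae <| .of_forall fun x => by simp

lemma wLp_const_mul (p : ℝ≥0∞) (w : Euc N → ℝ) (a : ℂ) (g : Euc N → ℂ) :
    wLp p w (fun x => a * g x) = ‖a‖ₑ * wLp p w g := by
  simp only [wLp_eq_eLpNorm_exp_smul, ← smul_eq_mul a, smul_comm _ a]
  exact eLpNorm_const_smul a _ p volume

lemma wLp_tsum_le [Countable ι] (hp : 1 ≤ p) (hw : AEMeasurable w)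
    (hu : ∀ j, AEStronglyMeasurable (u j)) (hsum : ∀ᵐ x, Summable fun j => u j x) :
    wLp p w (fun x => ∑' j, u j x) ≤ ∑' j, wLp p w (u j) := by
  simp only [wLp_eq_eLpNorm_exp_smul, ← tsum_const_smul'']
  refine eLpNorm_tsum_le hp (fun j => hw.exp.aestronglyMeasurable.smul (hu j)) ?_
  filter_upwards [hsum] with x hx using hx.const_smul _

lemma eLpNorm_restrict_le_mul_wLp {K : Set (Euc N)} (hK : MeasurableSet K) {M : ℝ}
    (hM : ∀ x ∈ K, -M ≤ w x) (g : Euc N → ℂ) :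
    eLpNorm g p (volume.restrict K) ≤ ENNReal.ofReal (Real.exp M) * wLp p w g := by
  have hbound : ∀ᵐ x ∂volume.restrict K, ‖g x‖ ≤ Real.exp M * ‖Real.exp (w x) * ‖g x‖‖ := by
    filter_upwards [ae_restrict_mem hK] with x hx
    rw [Real.norm_of_nonneg (by positivity), ← mul_assoc, ← Real.exp_add]
    exact le_mul_of_one_le_left (norm_nonneg _) (Real.one_le_exp (by linarith [hM x hx]))
  exact (eLpNorm_le_mul_eLpNorm_of_ae_le_mul hbound p).trans
    (mul_le_mul_right (eLpNorm_mono_measure _ Measure.restrict_le_self) _)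

lemma exists_setLIntegral_enorm_le_mul_wLp (hp : 1 ≤ p) {K : Set (Euc N)} (hK : IsCompact K)
    (hw : ContinuousOn w K) :
    ∃ C ≠ ⊤, ∀ g : Euc N → ℂ, AEStronglyMeasurable g →
      ∫⁻ x in K, ‖g x‖ₑ ≤ C * wLp p w g := by
  obtain ⟨M, hM⟩ := hK.bddAbove_image hw.neg
  refine ⟨ENNReal.ofReal (Real.exp M) * volume K ^ (1 / (1 : ℝ≥0∞).toReal - 1 / p.toReal),
    ENNReal.mul_ne_top ENNReal.ofReal_ne_top
      (ENNReal.rpow_ne_top_of_nonneg ?_ hK.measure_lt_top.ne), fun g hg => ?_⟩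
  · rcases eq_or_ne p ⊤ with rfl | hp_top
    · simp
    · have hp_real : 1 ≤ p.toReal := by simpa using ENNReal.toReal_mono hp_top hp
      simpa using inv_le_one_of_one_le₀ hp_real
  calc ∫⁻ x in K, ‖g x‖ₑ = eLpNorm g 1 (volume.restrict K) := eLpNorm_one_eq_lintegral_enorm.symm
    _ ≤ eLpNorm g p (volume.restrict K) *
          volume.restrict K Set.univ ^ (1 / (1 : ℝ≥0∞).toReal - 1 / p.toReal) :=
        eLpNorm_le_eLpNorm_mul_rpow_measure_univ hp hg.restrict
    _ ≤ ENNReal.ofReal (Real.exp M) * wLp p w g *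
          volume K ^ (1 / (1 : ℝ≥0∞).toReal - 1 / p.toReal) := by
        rw [Measure.restrict_apply_univ]
        gcongr
        exact eLpNorm_restrict_le_mul_wLp hK.measurableSet
          (fun x hx => neg_le.1 (hM (Set.mem_image_of_mem _ hx))) g
    _ = _ := mul_right_comm ..

lemma exists_enorm_le_mul_sum_wLp_mderiv (hp : 1 ≤ p) {a b : Fin N → ℝ} (hab : ∀ i, 1 ≤ b i - a i)
    (hw : ContinuousOn w (box a b)) :
    ∃ C ≠ ⊤, ∀ g : Euc N → ℂ, ContDiff ℝ (⊤ : ℕ∞) g → ∀ x ∈ box a b,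
      ‖g x‖ₑ ≤ C * ∑ γ, wLp p w (mderiv (mixedIndex γ) g) := by
  obtain ⟨C, hC, hle⟩ := exists_setLIntegral_enorm_le_mul_wLp hp (isCompact_box a b) hw
  refine ⟨C, hC, fun g hg x hx => ?_⟩
  have hcont : ∀ γ, Continuous (mderiv (mixedIndex γ) g) := fun γ =>
    (contDiff_mderiv _ hg).continuous
  calc ‖g x‖ₑ ≤ ∫⁻ z in box a b, ∑ γ, ‖mderiv (mixedIndex γ) g z‖ₑ := by
        simpa only [mixedDerivSum, Finset.powerset_univ] using
          enorm_le_setLIntegral_mixedDerivSum hab hg hx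
    _ = ∑ γ, ∫⁻ z in box a b, ‖mderiv (mixedIndex γ) g z‖ₑ :=
        lintegral_finsetSum _ fun γ _ => (hcont γ).enorm.measurable
    _ ≤ ∑ γ, C * wLp p w (mderiv (mixedIndex γ) g) :=
        Finset.sum_le_sum fun γ _ => hle _ (hcont γ).aestronglyMeasurable
    _ = C * ∑ γ, wLp p w (mderiv (mixedIndex γ) g) := (Finset.mul_sum ..).symm

lemma locallyDominated_of_tsum_wLp_ne_top (hp : 1 ≤ p) (hw : Continuous w)
    (hu : ∀ j, ContDiff ℝ (⊤ : ℕ∞) (u j))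
    (hfin : ∀ γ, ∑' j, wLp p w (mderiv (mixedIndex γ) (u j)) ≠ ⊤) : LocallyDominated u := by
  intro R
  have hside : ∀ _ : Fin N, 1 ≤ max R 1 - -max R 1 := fun _ => by linarith [le_max_right R 1]
  obtain ⟨C, hC, hle⟩ := exists_enorm_le_mul_sum_wLp_mderiv hp hside hw.continuousOn
  have htsum : ∑' j, C * ∑ γ, wLp p w (mderiv (mixedIndex γ) (u j)) ≠ ⊤ := by
    rw [ENNReal.tsum_mul_left, Summable.tsum_finsetSum fun _ _ => ENNReal.summable]
    exact ENNReal.mul_ne_top hC (ENNReal.sum_ne_top.2 fun γ _ => hfin γ)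
  refine ⟨_, ENNReal.summable_toReal htsum, fun j x hx => ?_⟩
  rw [← toReal_enorm]
  exact ENNReal.toReal_mono (ENNReal.ne_top_of_tsum_ne_top htsum j) <| hle _ (hu j) x <|
    ball_subset_box _ (Metric.ball_subset_ball (le_max_left R 1) hx)

lemma wLp_mderiv_tsum_le [Countable ι] (hp : 1 ≤ p) (hw : Continuous w)
    (hu : ∀ j, ContDiff ℝ (⊤ : ℕ∞) (u j)) (hfin : ∀ β, ∑' j, wLp p w (mderiv β (u j)) ≠ ⊤)
    (β : Fin N → ℕ) :
    wLp p w (mderiv β fun x => ∑' j, u j x) ≤ ∑' j, wLp p w (mderiv β (u j)) := by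
  have hdom : ∀ β, LocallyDominated fun j => mderiv β (u j) := fun β =>
    locallyDominated_of_tsum_wLp_ne_top hp hw (fun j => contDiff_mderiv β (hu j)) fun γ => by
      simpa only [mderiv_mderiv _ _ (hu _)] using hfin (β + mixedIndex γ)
  rw [mderiv_tsum hu hdom]
  exact wLp_tsum_le hp hw.aemeasurable
    (fun j => (contDiff_mderiv β (hu j)).continuous.aestronglyMeasurable)
    (.of_forall (hdom β).summable)

end WeightedLp

section LpSequenceNorm

variable {ι : Type*} {p : ℝ}

lemma le_tsum_rpow_rpow_one_div (hp : 0 < p) (a : ι → ℝ≥0∞) (i : ι) :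
    a i ≤ (∑' j, a j ^ p) ^ (1 / p) := by
  rw [one_div, ENNReal.le_rpow_inv_iff hp]
  exact ENNReal.le_tsum (f := fun j => a j ^ p) i

lemma tsum_rpow_rpow_one_div_le_tsum (hp : 1 ≤ p) (a : ι → ℝ≥0∞) :
    (∑' i, a i ^ p) ^ (1 / p) ≤ ∑' i, a i := by
  rw [one_div, ENNReal.rpow_inv_le_iff (one_pos.trans_le hp)]
  have hsplit : ∀ x : ℝ≥0∞, x ^ p = x * x ^ (p - 1) := fun x => by
    conv_rhs => enter [1]; rw [← ENNReal.rpow_one x]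
    rw [← ENNReal.rpow_add_of_nonneg _ _ zero_le_one (sub_nonneg.2 hp), add_sub_cancel]
  calc ∑' i, a i ^ p = ∑' i, a i * a i ^ (p - 1) := by simp only [hsplit]
    _ ≤ ∑' i, a i * (∑' j, a j) ^ (p - 1) := by
        gcongr with i
        exact ENNReal.le_tsum i
    _ = (∑' i, a i) ^ p := by rw [ENNReal.tsum_mul_right, ← hsplit]

lemma ofReal_exp_add (x y : ℝ) :
    ENNReal.ofReal (Real.exp (x + y)) =
      ENNReal.ofReal (Real.exp x) * ENNReal.ofReal (Real.exp y) := by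
  rw [Real.exp_add, ENNReal.ofReal_mul (Real.exp_pos x).le]

variable {N : ℕ} {ω : ℝ → ℝ} {lam μ : ℝ}

lemma tnorm_eq_tsum_mul_rpow (hp : 0 ≤ p) (f : Euc N → ℂ) :
    tnorm ω lam μ p f = (∑' α : Fin N → ℕ,
      (ENNReal.ofReal (Real.exp (-(lam * phiStar ω (msize α / lam)))) *
        wLp (ENNReal.ofReal p) (fun x => μ * ω ‖x‖) (mderiv α f)) ^ p) ^ (1 / p) := by
  unfold tnorm
  congr 2 with α
  rw [ENNReal.mul_rpow_of_nonneg _ _ hp, ENNReal.ofReal_rpow_of_pos (Real.exp_pos _),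
    ← Real.exp_mul, mul_comm]
  congr 3
  ring

lemma wLp_mderiv_le_tnorm (hp : 0 < p) (α : Fin N → ℕ) (f : Euc N → ℂ) :
    wLp (ENNReal.ofReal p) (fun x => μ * ω ‖x‖) (mderiv α f) ≤
      ENNReal.ofReal (Real.exp (lam * phiStar ω (msize α / lam))) * tnorm ω lam μ p f := by
  set s := lam * phiStar ω (msize α / lam)
  set A := wLp (ENNReal.ofReal p) (fun x => μ * ω ‖x‖) (mderiv α f)
  have hterm : ENNReal.ofReal (Real.exp (-s)) * A ≤ tnorm ω lam μ p f := by
    rw [tnorm_eq_tsum_mul_rpow hp.le]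
    exact le_tsum_rpow_rpow_one_div hp (fun α : Fin N → ℕ =>
      ENNReal.ofReal (Real.exp (-(lam * phiStar ω (msize α / lam)))) *
        wLp (ENNReal.ofReal p) (fun x => μ * ω ‖x‖) (mderiv α f)) α
  calc A = ENNReal.ofReal (Real.exp s) * (ENNReal.ofReal (Real.exp (-s)) * A) := by
        rw [← mul_assoc, ← ofReal_exp_add, add_neg_cancel, Real.exp_zero, ENNReal.ofReal_one,
          one_mul]
    _ ≤ _ := by gcongr

lemma tnorm_le_tsum (hp : 1 ≤ p) (f : Euc N → ℂ) :
    tnorm ω lam μ p f ≤ ∑' α : Fin N → ℕ,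
      ENNReal.ofReal (Real.exp (-(lam * phiStar ω (msize α / lam)))) *
        wLp (ENNReal.ofReal p) (fun x => μ * ω ‖x‖) (mderiv α f) := by
  rw [tnorm_eq_tsum_mul_rpow (zero_le_one.trans hp)]
  exact tsum_rpow_rpow_one_div_le_tsum hp _

end LpSequenceNorm

section UltradifferentialOperator

variable {N : ℕ} {ω : ℝ → ℝ} {L l m x y : ℝ}

lemma add_one_comp_exp_le (hLprop : ∀ t, 0 ≤ t → ω (Real.exp 1 * t) ≤ L * (1 + ω t)) :
    ∀ t ≥ 0, ω (Real.exp (t + 1)) ≤ L * (1 + ω (Real.exp t)) := fun t _ => by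
  rw [add_comm, Real.exp_add]
  exact hLprop _ (Real.exp_pos t).le

lemma mul_phiStar_div_le_sub (hω : ∀ t, 0 ≤ t → 0 ≤ ω t)
    (hlog : (fun t => Real.log (1 + t)) =o[atTop] ω)
    (hLprop : ∀ t, 0 ≤ t → ω (Real.exp 1 * t) ≤ L * (1 + ω t))
    (hl : 0 < l) (hm : 0 < m) (hlm : l * L ≤ m) :
    m * phiStar ω (y / m) ≤ l * phiStar ω (y / l) - y + l * L :=
  (hasYoungConj_comp_exp hω hlog).mul_youngConj_div_le_sub (fun t _ => hω _ (Real.exp_pos t).le)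
    (add_one_comp_exp_le hLprop) hl hm hlm

lemma two_mul_mul_phiStar_add_div_le (hω : ∀ t, 0 ≤ t → 0 ≤ ω t)
    (hlog : (fun t => Real.log (1 + t)) =o[atTop] ω)
    (hLprop : ∀ t, 0 ≤ t → ω (Real.exp 1 * t) ≤ L * (1 + ω t))
    (hl : 0 < l) (hm : 0 < m) (hlm : l * L ≤ m) :
    2 * m * phiStar ω ((x + y) / (2 * m)) ≤
      l * phiStar ω (x / l) - x + l * L + m * phiStar ω (y / m) :=
  (hasYoungConj_comp_exp hω hlog).two_mul_mul_youngConj_add_div_le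
    (fun t _ => hω _ (Real.exp_pos t).le) (add_one_comp_exp_le hLprop) hl hm hlm

/-- The coefficient `i^{|α|} ∂^α G(0) / α!` of `∂^α` in `G(D)`, in terms of `c α = ∂^α G(0)`. -/
def gdCoeff (c : (Fin N → ℕ) → ℂ) (α : Fin N → ℕ) : ℂ :=
  Complex.I ^ msize α * (c α / (mfact α : ℂ))

lemma norm_gdCoeff (c : (Fin N → ℕ) → ℂ) (α : Fin N → ℕ) :
    ‖gdCoeff c α‖ = ‖c α‖ / mfact α := by
  simp [gdCoeff]

lemma mfact_pos (α : Fin N → ℕ) : 0 < mfact α :=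
  Finset.prod_pos fun i _ => Nat.factorial_pos (α i)

variable {c : (Fin N → ℕ) → ℂ} {f : Euc N → ℂ} {k h μ p : ℝ}

lemma norm_gdCoeff_le
    (hc : ∀ α, ‖c α‖ ≤ (mfact α : ℝ) * Real.exp (k - k * phiStar ω ((msize α : ℝ) / k)))
    (α : Fin N → ℕ) : ‖gdCoeff c α‖ ≤ Real.exp (k - k * phiStar ω (msize α / k)) := by
  rw [norm_gdCoeff, div_le_iff₀' (mod_cast mfact_pos α)]
  exact hc α

lemma wLp_mderiv_gdCoeff_mul_le (hω : ∀ t, 0 ≤ t → 0 ≤ ω t)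
    (hlog : (fun t => Real.log (1 + t)) =o[atTop] ω)
    (hLprop : ∀ t, 0 ≤ t → ω (Real.exp 1 * t) ≤ L * (1 + ω t)) (hk : 0 < k)
    (hc : ∀ α, ‖c α‖ ≤ (mfact α : ℝ) * Real.exp (k - k * phiStar ω ((msize α : ℝ) / k)))
    (hp : 0 < p) (hm : 0 < m) (hkm : k * L ≤ m) (hf : ContDiff ℝ (⊤ : ℕ∞) f)
    (α β : Fin N → ℕ) :
    wLp (ENNReal.ofReal p) (fun x => μ * ω ‖x‖) (mderiv β fun x => gdCoeff c α * mderiv α f x) ≤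
      ENNReal.ofReal (Real.exp (-msize α)) *
        (ENNReal.ofReal (Real.exp (k + k * L + m * phiStar ω (msize β / m))) *
          tnorm ω (2 * m) μ p f) := by
  have hexp : k - k * phiStar ω (msize α / k) +
      2 * m * phiStar ω (msize (α + β) / (2 * m)) ≤
        -msize α + (k + k * L + m * phiStar ω (msize β / m)) := by
    rw [msize_add, Nat.cast_add]
    linarith [two_mul_mul_phiStar_add_div_le (x := msize α) (y := msize β) hω hlog hLprop hk hm hkm]
  rw [mderiv_const_mul _ _ (contDiff_mderiv α hf), mderiv_mderiv _ _ hf, wLp_const_mul,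
    ← ofReal_norm]
  calc ENNReal.ofReal ‖gdCoeff c α‖ *
        wLp (ENNReal.ofReal p) (fun x => μ * ω ‖x‖) (mderiv (α + β) f)
      ≤ ENNReal.ofReal (Real.exp (k - k * phiStar ω (msize α / k))) *
          (ENNReal.ofReal (Real.exp (2 * m * phiStar ω (msize (α + β) / (2 * m)))) *
            tnorm ω (2 * m) μ p f) := by
        gcongr
        · exact norm_gdCoeff_le hc α
        · exact wLp_mderiv_le_tnorm hp _ f
    _ = ENNReal.ofReal (Real.exp (k - k * phiStar ω (msize α / k) +
          2 * m * phiStar ω (msize (α + β) / (2 * m)))) * tnorm ω (2 * m) μ p f := by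
        rw [ofReal_exp_add, mul_assoc (ENNReal.ofReal _)]
    _ ≤ ENNReal.ofReal (Real.exp (-msize α + (k + k * L + m * phiStar ω (msize β / m)))) *
          tnorm ω (2 * m) μ p f := by gcongr
    _ = _ := by rw [ofReal_exp_add (-_), mul_assoc]

lemma wLp_mderiv_GD_le (hω_cont : ContinuousOn ω (Set.Ici 0)) (hω : ∀ t, 0 ≤ t → 0 ≤ ω t)
    (hlog : (fun t => Real.log (1 + t)) =o[atTop] ω)
    (hLprop : ∀ t, 0 ≤ t → ω (Real.exp 1 * t) ≤ L * (1 + ω t)) (hk : 0 < k)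
    (hc : ∀ α, ‖c α‖ ≤ (mfact α : ℝ) * Real.exp (k - k * phiStar ω ((msize α : ℝ) / k)))
    (hp : 1 ≤ p) (hm : 0 < m) (hkm : k * L ≤ m) (hf : ContDiff ℝ (⊤ : ℕ∞) f)
    (hfin : tnorm ω (2 * m) μ p f ≠ ⊤) (β : Fin N → ℕ) :
    wLp (ENNReal.ofReal p) (fun x => μ * ω ‖x‖) (mderiv β (GD c f)) ≤
      ENNReal.ofReal ((1 - Real.exp (-1))⁻¹ ^ N) *
        (ENNReal.ofReal (Real.exp (k + k * L + m * phiStar ω (msize β / m))) *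
          tnorm ω (2 * m) μ p f) := by
  have hw : Continuous fun x : Euc N => μ * ω ‖x‖ :=
    continuous_const.mul (hω_cont.comp_continuous continuous_norm fun x => norm_nonneg x)
  have hterms : ∀ β : Fin N → ℕ,
      ∑' α, wLp (ENNReal.ofReal p) (fun x => μ * ω ‖x‖)
        (mderiv β fun x => gdCoeff c α * mderiv α f x) ≤
        ENNReal.ofReal ((1 - Real.exp (-1))⁻¹ ^ N) *
          (ENNReal.ofReal (Real.exp (k + k * L + m * phiStar ω (msize β / m))) *
            tnorm ω (2 * m) μ p f) := by
    intro β
    rw [← tsum_ofReal_exp_neg_msize, ← ENNReal.tsum_mul_right]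
    exact ENNReal.tsum_le_tsum fun α => wLp_mderiv_gdCoeff_mul_le hω hlog hLprop hk hc
      (one_pos.trans_le hp) hm hkm hf α β
  refine (wLp_mderiv_tsum_le (ENNReal.one_le_ofReal.2 hp) hw
    (fun α => contDiff_const.mul (contDiff_mderiv α hf)) (fun β => ?_) β).trans (hterms β)
  exact ne_top_of_le_ne_top (ENNReal.mul_ne_top ENNReal.ofReal_ne_top
    (ENNReal.mul_ne_top ENNReal.ofReal_ne_top hfin)) (hterms β)

lemma ofReal_exp_mul_wLp_mderiv_GD_le (hω_cont : ContinuousOn ω (Set.Ici 0))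
    (hω : ∀ t, 0 ≤ t → 0 ≤ ω t) (hlog : (fun t => Real.log (1 + t)) =o[atTop] ω)
    (hLprop : ∀ t, 0 ≤ t → ω (Real.exp 1 * t) ≤ L * (1 + ω t)) (hk : 0 < k)
    (hc : ∀ α, ‖c α‖ ≤ (mfact α : ℝ) * Real.exp (k - k * phiStar ω ((msize α : ℝ) / k)))
    (hp : 1 ≤ p) (hh : 0 < h) (hm : 0 < m) (hkm : k * L ≤ m) (hhm : h * L ≤ m)
    (hf : ContDiff ℝ (⊤ : ℕ∞) f) (hfin : tnorm ω (2 * m) μ p f ≠ ⊤) (β : Fin N → ℕ) :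
    ENNReal.ofReal (Real.exp (-(h * phiStar ω (msize β / h)))) *
        wLp (ENNReal.ofReal p) (fun x => μ * ω ‖x‖) (mderiv β (GD c f)) ≤
      ENNReal.ofReal (Real.exp (-msize β)) *
        (ENNReal.ofReal (Real.exp (k + k * L + h * L)) *
          (ENNReal.ofReal ((1 - Real.exp (-1))⁻¹ ^ N) * tnorm ω (2 * m) μ p f)) := by
  set S := ENNReal.ofReal ((1 - Real.exp (-1))⁻¹ ^ N)
  set T := tnorm ω (2 * m) μ p f
  have hexp : -(h * phiStar ω (msize β / h)) + (k + k * L + m * phiStar ω (msize β / m)) ≤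
      -msize β + (k + k * L + h * L) := by
    linarith [mul_phiStar_div_le_sub (y := msize β) hω hlog hLprop hh hm hhm]
  calc _ ≤ ENNReal.ofReal (Real.exp (-(h * phiStar ω (msize β / h)))) *
        (S * (ENNReal.ofReal (Real.exp (k + k * L + m * phiStar ω (msize β / m))) * T)) := by
        gcongr
        exact wLp_mderiv_GD_le hω_cont hω hlog hLprop hk hc hp hm hkm hf hfin β
    _ = ENNReal.ofReal (Real.exp (-(h * phiStar ω (msize β / h)) +
          (k + k * L + m * phiStar ω (msize β / m)))) * (S * T) := by
        rw [ofReal_exp_add (-_)]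
        ring
    _ ≤ ENNReal.ofReal (Real.exp (-msize β + (k + k * L + h * L))) * (S * T) := by gcongr
    _ = _ := by rw [ofReal_exp_add (-_), mul_assoc]

theorem GD_continuous_on_DLp_general (hω_cont : ContinuousOn ω (Set.Ici 0))
    (hω : ∀ t, 0 ≤ t → 0 ≤ ω t) (hlog : (fun t => Real.log (1 + t)) =o[atTop] ω) (hL : 0 < L)
    (hLprop : ∀ t, 0 ≤ t → ω (Real.exp 1 * t) ≤ L * (1 + ω t)) (hk : 0 < k)
    (hc : ∀ α, ‖c α‖ ≤ (mfact α : ℝ) * Real.exp (k - k * phiStar ω ((msize α : ℝ) / k)))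
    (hp : 1 ≤ p) (hh : 0 < h) (hm : max (k * L) (h * L) ≤ m) :
    ∃ C > 0, ∀ f : Euc N → ℂ, ContDiff ℝ (⊤ : ℕ∞) f → tnorm ω (2 * m) μ p f < ⊤ →
      tnorm ω h μ p (GD c f) ≤ ENNReal.ofReal C * tnorm ω (2 * m) μ p f := by
  obtain ⟨hkm, hhm⟩ := max_le_iff.1 hm
  set S : ℝ := (1 - Real.exp (-1))⁻¹ ^ N
  have hS : 0 < S :=
    pow_pos (inv_pos.2 (sub_pos.2 (Real.exp_lt_one_iff.2 neg_one_lt_zero))) N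
  refine ⟨S * (Real.exp (k + k * L + h * L) * S), by positivity, fun f hf hfin => ?_⟩
  calc tnorm ω h μ p (GD c f)
      ≤ ∑' β : Fin N → ℕ, ENNReal.ofReal (Real.exp (-(h * phiStar ω (msize β / h)))) *
          wLp (ENNReal.ofReal p) (fun x => μ * ω ‖x‖) (mderiv β (GD c f)) := tnorm_le_tsum hp _
    _ ≤ ∑' β : Fin N → ℕ, ENNReal.ofReal (Real.exp (-msize β)) *
          (ENNReal.ofReal (Real.exp (k + k * L + h * L)) *
            (ENNReal.ofReal S * tnorm ω (2 * m) μ p f)) :=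
        ENNReal.tsum_le_tsum <| ofReal_exp_mul_wLp_mderiv_GD_le hω_cont hω hlog hLprop hk hc hp hh
          ((mul_pos hk hL).trans_le hkm) hkm hhm hf hfin.ne
    _ = ENNReal.ofReal (S * (Real.exp (k + k * L + h * L) * S)) * tnorm ω (2 * m) μ p f := by
        rw [ENNReal.tsum_mul_right, tsum_ofReal_exp_neg_msize, ENNReal.ofReal_mul hS.le,
          ENNReal.ofReal_mul (Real.exp_pos _).le, mul_assoc, mul_assoc]

end UltradifferentialOperator

open Asymptotics in
/-- An ultradifferential operator of `ω`-class maps `D_{L^p_μ,ω}(ℝ^N)` continuously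
into itself: `t_{h,μ,p}(G(D)f) ≤ C t_{2m,μ,p}(f)` for `m ≥ max{kL, hL}`. -/
theorem GD_continuous_on_DLp
    {N : ℕ} (ω : ℝ → ℝ) (hω : IsWeightFun ω)
    (hlog : (fun t => Real.log (1 + t)) =o[atTop] ω)
    (L : ℝ) (hL : 1 ≤ L)
    (hLprop : ∀ t, 0 ≤ t → ω (Real.exp 1 * t) ≤ L * (1 + ω t))
    (k : ℝ) (hk : 0 < k)
    (c : (Fin N → ℕ) → ℂ)
    (hc : ∀ α : Fin N → ℕ,
      ‖c α‖ ≤ (mfact α : ℝ) * Real.exp (k - k * phiStar ω ((msize α : ℝ) / k)))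
    (μ : ℝ) (p : ℝ) (hp : 1 ≤ p) (h : ℕ) (hh : 0 < h)
    (m : ℕ) (hm : max (k * L) ((h : ℝ) * L) ≤ (m : ℝ)) :
    ∃ C > 0, ∀ f : Euc N → ℂ, ContDiff ℝ (⊤ : ℕ∞) f →
      tnorm ω (2 * (m : ℝ)) μ p f < ⊤ →
      tnorm ω (h : ℝ) μ p (GD c f) ≤ ENNReal.ofReal C * tnorm ω (2 * (m : ℝ)) μ p f :=
  GD_continuous_on_DLp_general hω.continuous hω.nonneg hlog (one_pos.trans_le hL) hLprop hk hc hp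
    (mod_cast hh) hm
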